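/- In ℝ² with the weight e^{x²+y²} (i.e. dγ₂ = e^{x²+y²} dx dy), let c and d be respectively the first and second positive zeros of the polynomial 8t⁶ − 60t⁴ + 90t² − 15 (so that c ∈ (0.43, 0.44) and d ∈ (1.33, 1.34)), let T = (c,d) × (−c,c), and let r_T > 0 be the unique radius with π(e^{r_T²} − 1) = γ₂(T). Then μ₁(B_{r_T}; γ₂) < μ₁(T; γ₂). Consequently, without the assumption of symmetry about the origin, the ball centered at the origin does not in general maximize the first nontrivial weighted Neumann eigenvalue among domains of prescribed γ₂-measure. -/

import Mathlib

open MeasureTheory Set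

/-- The first nontrivial Neumann eigenvalue of `-div(e^{h(|x|)} ∇v) = μ e^{h(|x|)} v`
on `Ω ⊆ ℝᴺ`, defined variationally as the infimum of the weighted Rayleigh quotient
over smooth trial functions with weighted mean zero. -/
noncomputable def weightedMu1 (N : ℕ) (h : ℝ → ℝ) (Ω : Set (EuclideanSpace ℝ (Fin N))) : ℝ :=
  sInf { μ : ℝ | ∃ v : EuclideanSpace ℝ (Fin N) → ℝ, ContDiff ℝ 1 v ∧
    0 < (∫ x in Ω, (v x) ^ 2 * Real.exp (h ‖x‖)) ∧
    (∫ x in Ω, v x * Real.exp (h ‖x‖)) = 0 ∧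
    μ = (∫ x in Ω, ‖fderiv ℝ v x‖ ^ 2 * Real.exp (h ‖x‖)) /
        ∫ x in Ω, (v x) ^ 2 * Real.exp (h ‖x‖) }

/-!
The polynomial `8t⁶ - 60t⁴ + 90t² - 15` is `He₆(√2 t)`. With `u(x) = e^{-x²} He₅(√2 x)` one has
`u'(x) = -√2 e^{-x²} He₆(√2 x)` and `(e^{x²} u')' = -12 e^{x²} u`, so `u` is a Neumann
eigenfunction with eigenvalue `12` for the weight `w = e^{x²}` on both `(c, d)` and `(-c, c)`, and
`u'` has no zero inside either interval. If `f` has `w`-mean zero and `F = ∫ f w`, completing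
squares against `F² / (w u')` (Picone's argument) shows that the Rayleigh quotient of `f` is at
least `12` on each interval; the bound passes to the product, so `μ₁(T) ≥ 12`.

On the disk of radius `r` the coordinate functions give
`μ₁ ≤ 2 ∫ e^{|x|²} / ∫ |x|² e^{|x|²} ≤ 2 + 4 / (e^{r²} - 1)`, which is below `12` as soon as
`e^{r²} - 1 > 2/5`, that is, `γ₂(T) > 2π/5`. This follows from `e^{x² + y²} ≥ 1 + x²` and crude
bounds for `c` and `d`.
-/

open Filter Topology

/-- The one-dimensional Poincaré inequality with weight `w` and constant `K` on `(a, b)`: every `C¹`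
function of `w`-mean zero has weighted Rayleigh quotient at least `K`. -/
def WeightedPoincare (w : ℝ → ℝ) (K a b : ℝ) : Prop :=
  ∀ f : ℝ → ℝ, ContDiff ℝ 1 f → ∫ x in a..b, f x * w x = 0 →
    K * ∫ x in a..b, f x ^ 2 * w x ≤ ∫ x in a..b, deriv f x ^ 2 * w x

lemma continuousAt_sq_div_of_hasDerivAt {F G : ℝ → ℝ} {F' G' x : ℝ} (hF : HasDerivAt F F' x)
    (hG : HasDerivAt G G' x) (hFx : F x = 0) (hGx : G x = 0) (hG' : G' ≠ 0) :
    ContinuousAt (fun y => F y ^ 2 / G y) x := by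
  have hFG : F =O[𝓝 x] G := by
    have hsub := (HasDerivAtFilter.isBigO_sub hF).trans
      (HasDerivAtFilter.isTheta_sub hG hG').isBigO_symm
    simpa [Function.comp_def, hFx, hGx] using
      hsub.comp_tendsto (tendsto_id.prodMk tendsto_const_pure)
  obtain ⟨C, hC⟩ := hFG.bound
  have hquot : (fun y => F y ^ 2 / G y) =O[𝓝 x] F := by
    refine Asymptotics.IsBigO.of_bound C ?_
    filter_upwards [hC] with y hy
    rcases eq_or_ne (G y) 0 with hGy | hGy
    · simp_all
    · rw [norm_div, norm_pow, div_le_iff₀ (norm_pos_iff.2 hGy)]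
      nlinarith [norm_nonneg (F y)]
  have hlim : Tendsto F (𝓝 x) (𝓝 0) := by simpa [hFx] using hF.continuousAt.tendsto
  simpa [ContinuousAt, hFx] using hquot.trans_tendsto hlim

section NeumannEigenfunction

variable {w u u' : ℝ → ℝ} {K a b : ℝ}

lemma endpoints_ne_zero_of_neumann_eigenfunction (hab : a < b) (hK : K ≠ 0) (hw : ∀ x, w x ≠ 0)
    (hu : ∀ x, HasDerivAt u (u' x) x)
    (hflux : ∀ x, HasDerivAt (fun y => w y * u' y) (-(K * (w x * u x))) x)
    (ha : u' a = 0) (hb : u' b = 0) (hne : ∀ x ∈ Ioo a b, u' x ≠ 0) : u a ≠ 0 ∧ u b ≠ 0 := by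
  have hu_cont : Continuous u := continuous_iff_continuousAt.2 fun x => (hu x).continuousAt
  have hflux_cont : Continuous fun y => w y * u' y :=
    continuous_iff_continuousAt.2 fun x => (hflux x).continuousAt
  obtain ⟨z, hz, hz0⟩ := exists_hasDerivAt_eq_zero hab hflux_cont.continuousOn
    (by simp [ha, hb]) fun x _ => hflux x
  have huz : u z = 0 := by simpa [hK, hw z] using hz0
  constructor <;> intro h0
  · obtain ⟨y, hy, hy0⟩ := exists_hasDerivAt_eq_zero hz.1 hu_cont.continuousOn
      (h0.trans huz.symm) fun x _ => hu x
    exact hne y ⟨hy.1, hy.2.trans hz.2⟩ hy0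
  · obtain ⟨y, hy, hy0⟩ := exists_hasDerivAt_eq_zero hz.2 hu_cont.continuousOn
      (huz.trans h0.symm) fun x _ => hu x
    exact hne y ⟨hz.1.trans hy.1, hy.2⟩ hy0

-- The left side is the derivative of `-2KFf - K²F²u / (Wu')` when `F' = fW` and `(Wu')' = -KWu`,
-- in the form in which the differentiation rules produce it.
lemma picone_inequality {K W f f' F u u' : ℝ} (hK : 0 ≤ K) (hW : 0 < W) (hu' : u' ≠ 0) :
    -(2 * K) * (f * W * f + F * f') - K ^ 2 *
      ((2 * F * (f * W) * (W * u') - F ^ 2 * -(K * (W * u))) / (W * u') ^ 2 * u +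
        F ^ 2 / (W * u') * u') ≤
      f' ^ 2 * W - K * (f ^ 2 * W) := by
  have hsquares : 0 ≤ (W * f' + K * F) ^ 2 / W + K * W * (f + K * F * u / (W * u')) ^ 2 := by
    positivity
  refine sub_nonneg.1 (hsquares.trans_eq ?_)
  field_simp
  ring

lemma continuousOn_sq_div_flux_of_neumann_eigenfunction {F F' : ℝ → ℝ} (hab : a < b) (hK : K ≠ 0)
    (hw : ∀ x, w x ≠ 0) (hu : ∀ x, HasDerivAt u (u' x) x)
    (hflux : ∀ x, HasDerivAt (fun y => w y * u' y) (-(K * (w x * u x))) x)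
    (ha : u' a = 0) (hb : u' b = 0) (hne : ∀ x ∈ Ioo a b, u' x ≠ 0)
    (hF : ∀ x, HasDerivAt F (F' x) x) (hFa : F a = 0) (hFb : F b = 0) :
    ContinuousOn (fun x => F x ^ 2 / (w x * u' x)) (Icc a b) := by
  obtain ⟨hua, hub⟩ := endpoints_ne_zero_of_neumann_eigenfunction hab hK hw hu hflux ha hb hne
  have hendpoint : ∀ x, F x = 0 → u' x = 0 → u x ≠ 0 →
      ContinuousAt (fun y => F y ^ 2 / (w y * u' y)) x := fun x hFx hu'x hux =>
    continuousAt_sq_div_of_hasDerivAt (hF x) (hflux x) hFx (by simp [hu'x])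
      (neg_ne_zero.2 (mul_ne_zero hK (mul_ne_zero (hw x) hux)))
  intro x hx
  refine ContinuousAt.continuousWithinAt ?_
  rcases eq_endpoints_or_mem_Ioo_of_mem_Icc hx with rfl | rfl | hx
  · exact hendpoint x hFa ha hua
  · exact hendpoint x hFb hb hub
  · exact ((hF x).continuousAt.pow 2).div (hflux x).continuousAt (mul_ne_zero (hw x) (hne x hx))

theorem weightedPoincare_of_neumann_eigenfunction (hab : a < b) (hK : 0 < K)
    (hw_cont : Continuous w) (hw : ∀ x, 0 < w x) (hu : ∀ x, HasDerivAt u (u' x) x)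
    (hflux : ∀ x, HasDerivAt (fun y => w y * u' y) (-(K * (w x * u x))) x)
    (ha : u' a = 0) (hb : u' b = 0) (hne : ∀ x ∈ Ioo a b, u' x ≠ 0) :
    WeightedPoincare w K a b := by
  intro f hf hmean
  have hf_cont := hf.continuous
  have := hf.continuous_deriv_one
  set F : ℝ → ℝ := fun x => ∫ t in a..x, f t * w t
  have hF : ∀ x, HasDerivAt F (f x * w x) x := fun x =>
    ((hf_cont.mul hw_cont).integral_hasStrictDerivAt a x).hasDerivAt
  have hFa : F a = 0 := intervalIntegral.integral_same
  have hFb : F b = 0 := hmean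
  set Q : ℝ → ℝ := fun x => -(2 * K) * (F x * f x) - K ^ 2 * (F x ^ 2 / (w x * u' x) * u x)
  have hQ_cont : ContinuousOn Q (Icc a b) :=
    (((continuous_iff_continuousAt.2 fun x => (hF x).continuousAt).mul hf_cont).const_mul
      _).continuousOn.sub ((((continuousOn_sq_div_flux_of_neumann_eigenfunction hab hK.ne'
        (fun x => (hw x).ne') hu hflux ha hb hne hF hFa hFb).mul
          fun x _ => (hu x).continuousAt.continuousWithinAt)).const_mul _)
  have hQ_deriv : ∀ x ∈ Ioo a b, HasDerivAt Q _ x := fun x hx =>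
    (((hF x).mul (hf.differentiable_one x).hasDerivAt).const_mul _).sub
      (((((hF x).pow 2).div (hflux x) (mul_ne_zero (hw x).ne' (hne x hx))).mul (hu x)).const_mul _)
  have hQ_le := intervalIntegral.sub_le_integral_of_hasDeriv_right_of_le hab.le hQ_cont
    (fun x hx => (hQ_deriv x hx).hasDerivWithinAt)
    (φ := fun x => deriv f x ^ 2 * w x - K * (f x ^ 2 * w x))
    (Continuous.integrableOn_Icc (by fun_prop))
    (fun x hx => by
      simpa using picone_inequality (f := f x) (f' := deriv f x) (F := F x) (u := u x) hK.le
        (hw x) (hne x hx))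
  rw [intervalIntegral.integral_sub (Continuous.intervalIntegrable (by fun_prop) _ _)
    (Continuous.intervalIntegrable (by fun_prop) _ _), intervalIntegral.integral_const_mul] at hQ_le
  have hQ_ends : Q b - Q a = 0 := by simp [Q, hFa, hFb]
  linarith

end NeumannEigenfunction

section Hermite

open Polynomial

lemma derivative_hermite_succ (n : ℕ) :
    derivative (hermite (n + 1)) = (n + 1 : ℤ[X]) * hermite n := by
  induction n with
  | zero => simp
  | succ n ih =>
    rw [hermite_succ, derivative_sub, derivative_mul, derivative_X, ih, hermite_succ n]
    simp only [derivative_mul, derivative_add, derivative_natCast, derivative_one]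
    push_cast
    ring

lemma hermite_add_two (n : ℕ) :
    hermite (n + 2) = X * hermite (n + 1) - (n + 1 : ℤ[X]) * hermite n := by
  rw [hermite_succ, derivative_hermite_succ]

lemma hasDerivAt_aeval_sqrt_two_mul (P : ℤ[X]) (x : ℝ) :
    HasDerivAt (fun y : ℝ => aeval (√2 * y) P) (√2 * aeval (√2 * x) (derivative P)) x := by
  simpa [Function.comp_def, mul_comm] using
    (P.hasDerivAt_aeval (√2 * x)).comp x ((hasDerivAt_id x).const_mul √2)

lemma hasDerivAt_exp_neg_sq_mul_hermite (n : ℕ) (x : ℝ) :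
    HasDerivAt (fun y : ℝ => Real.exp (-y ^ 2) * aeval (√2 * y) (hermite n))
      (-√2 * (Real.exp (-x ^ 2) * aeval (√2 * x) (hermite (n + 1)))) x := by
  have hexp : HasDerivAt (fun y : ℝ => Real.exp (-y ^ 2)) (Real.exp (-x ^ 2) * -(2 * x)) x := by
    simpa using ((hasDerivAt_pow 2 x).neg).exp
  refine (hexp.mul (hasDerivAt_aeval_sqrt_two_mul (hermite n) x)).congr_deriv ?_
  simp only [hermite_succ, map_sub, map_mul, aeval_X]
  linear_combination
    (x * Real.exp (-x ^ 2) * aeval (√2 * x) (hermite n)) * Real.sq_sqrt zero_le_two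

theorem weightedPoincare_exp_sq_of_hermite_zeros {n : ℕ} {a b : ℝ} (hab : a < b)
    (ha : aeval (√2 * a) (hermite (n + 1)) = 0) (hb : aeval (√2 * b) (hermite (n + 1)) = 0)
    (hne : ∀ x ∈ Ioo a b, aeval (√2 * x) (hermite (n + 1)) ≠ 0) :
    WeightedPoincare (fun x => Real.exp (x ^ 2)) (2 * (n + 1)) a b := by
  have hcancel : ∀ x : ℝ, Real.exp (x ^ 2) * Real.exp (-x ^ 2) = 1 := fun x => by
    rw [← Real.exp_add, add_neg_cancel, Real.exp_zero]
  refine weightedPoincare_of_neumann_eigenfunction hab (by positivity) (by fun_prop)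
    (fun x => Real.exp_pos _) (hasDerivAt_exp_neg_sq_mul_hermite n) (fun x => ?_) ?_ ?_ ?_
  · have hflux : (fun y : ℝ => Real.exp (y ^ 2) *
        (-√2 * (Real.exp (-y ^ 2) * aeval (√2 * y) (hermite (n + 1))))) =
          fun y => -√2 * aeval (√2 * y) (hermite (n + 1)) := funext fun y => by
      linear_combination (-√2 * aeval (√2 * y) (hermite (n + 1))) * hcancel y
    rw [hflux]
    refine ((hasDerivAt_aeval_sqrt_two_mul (hermite (n + 1)) x).const_mul (-√2)).congr_deriv ?_
    simp only [derivative_hermite_succ, map_mul, map_add, map_natCast, map_one]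
    linear_combination
      (-(n + 1) * aeval (√2 * x) (hermite n)) * Real.sq_sqrt zero_le_two +
        (2 * (n + 1) * aeval (√2 * x) (hermite n)) * hcancel x
  · simp only [ha, mul_zero]
  · simp only [hb, mul_zero]
  · exact fun x hx => mul_ne_zero (by simp) (mul_ne_zero (Real.exp_ne_zero _) (hne x hx))

end Hermite

section Tensorization

lemma hasDerivAt_intervalIntegral_of_continuous_deriv {E : Type*} [NormedAddCommGroup E]
    [NormedSpace ℝ E] {Φ Φ' : ℝ → ℝ → E} {p q : ℝ} (hΦ : ∀ x, Continuous (Φ x))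
    (hΦ' : Continuous (Function.uncurry Φ'))
    (hderiv : ∀ x y, HasDerivAt (fun s => Φ s y) (Φ' x y) x) (x₀ : ℝ) :
    HasDerivAt (fun x => ∫ y in p..q, Φ x y) (∫ y in p..q, Φ' x₀ y) x₀ := by
  obtain ⟨R, hR⟩ := (isCompact_Icc (a := x₀ - 1) (b := x₀ + 1)).prod (isCompact_uIcc (a := p)
    (b := q)) |>.exists_bound_of_continuousOn hΦ'.continuousOn
  refine (intervalIntegral.hasDerivAt_integral_of_dominated_loc_of_deriv_le (F := Φ) (F' := Φ')
    (bound := fun _ => R) (Icc_mem_nhds (sub_one_lt x₀) (lt_add_one x₀))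
    (Eventually.of_forall fun x => (hΦ x).aestronglyMeasurable)
    ((hΦ x₀).intervalIntegrable _ _)
    (hΦ'.comp (Continuous.prodMk_right x₀)).aestronglyMeasurable
    (Eventually.of_forall fun y hy x hx => hR (x, y) ⟨hx, uIoc_subset_uIcc hy⟩)
    intervalIntegrable_const (Eventually.of_forall fun y _ x _ => hderiv x y)).2

variable {w : ℝ → ℝ} {p q : ℝ}

lemma integral_sub_const_sq_mul {g : ℝ → ℝ} (hg : Continuous g) (hw : Continuous w) (m : ℝ) :
    ∫ y in p..q, (g y - m) ^ 2 * w y =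
      (∫ y in p..q, g y ^ 2 * w y) - 2 * m * (∫ y in p..q, g y * w y) +
        m ^ 2 * ∫ y in p..q, w y := by
  rw [← intervalIntegral.integral_const_mul, ← intervalIntegral.integral_const_mul,
    ← intervalIntegral.integral_sub, ← intervalIntegral.integral_add]
  · congr with y
    ring
  all_goals exact Continuous.intervalIntegrable (by fun_prop) _ _

lemma sq_integral_mul_le {g : ℝ → ℝ} (hg : Continuous g) (hw : Continuous w)
    (hw_nonneg : ∀ y, 0 ≤ w y) (hpq : p ≤ q) :
    (∫ y in p..q, g y * w y) ^ 2 ≤ (∫ y in p..q, w y) * ∫ y in p..q, g y ^ 2 * w y := by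
  have hquadratic : ∀ m : ℝ, 0 ≤ (∫ y in p..q, w y) * (m * m) +
      -(2 * ∫ y in p..q, g y * w y) * m + ∫ y in p..q, g y ^ 2 * w y := fun m => by
    have hnonneg : 0 ≤ ∫ y in p..q, (g y - m) ^ 2 * w y :=
      intervalIntegral.integral_nonneg hpq fun y _ => mul_nonneg (sq_nonneg _) (hw_nonneg y)
    rw [integral_sub_const_sq_mul hg hw] at hnonneg
    linarith
  have hdiscrim := discrim_le_zero hquadratic
  rw [discrim] at hdiscrim
  linarith

lemma WeightedPoincare.variance_le {K : ℝ} (hP : WeightedPoincare w K p q) (hw : Continuous w)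
    (hmass : 0 < ∫ y in p..q, w y) {f : ℝ → ℝ} (hf : ContDiff ℝ 1 f) :
    K * ((∫ y in p..q, w y) * (∫ y in p..q, f y ^ 2 * w y) - (∫ y in p..q, f y * w y) ^ 2) ≤
      (∫ y in p..q, w y) * ∫ y in p..q, deriv f y ^ 2 * w y := by
  have hf_cont := hf.continuous
  set Z := ∫ y in p..q, w y
  set m := (∫ y in p..q, f y * w y) / Z
  have hint : ∫ y in p..q, f y * w y = m * Z := (div_mul_cancel₀ _ hmass.ne').symm
  have hmean : ∫ y in p..q, (f y - m) * w y = 0 := by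
    simp only [sub_mul]
    rw [intervalIntegral.integral_sub (Continuous.intervalIntegrable (by fun_prop) _ _)
      (Continuous.intervalIntegrable (by fun_prop) _ _), intervalIntegral.integral_const_mul,
      hint, sub_self]
  have hcentred := hP (fun y => f y - m) (hf.sub contDiff_const) hmean
  simp only [deriv_sub_const] at hcentred
  rw [integral_sub_const_sq_mul hf_cont hw, hint] at hcentred
  rw [hint]
  refine le_trans (le_of_eq ?_) (mul_le_mul_of_nonneg_left hcentred hmass.le)
  ring

variable {V : ℝ × ℝ → ℝ}

lemma continuous_fderiv_apply_of_contDiff {E F : Type*} [NormedAddCommGroup E] [NormedSpace ℝ E]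
    [NormedAddCommGroup F] [NormedSpace ℝ F] {f : E → F} (hf : ContDiff ℝ 1 f) (e : E) :
    Continuous fun z => fderiv ℝ f z e :=
  (hf.continuous_fderiv one_ne_zero).clm_apply continuous_const

lemma hasDerivAt_left_of_contDiff (hV : ContDiff ℝ 1 V) (x y : ℝ) :
    HasDerivAt (fun s => V (s, y)) (fderiv ℝ V (x, y) (1, 0)) x :=
  (hV.differentiable_one (x, y)).hasFDerivAt.comp_hasDerivAt x
    ((hasDerivAt_id x).prodMk (hasDerivAt_const x y))

lemma hasDerivAt_right_of_contDiff (hV : ContDiff ℝ 1 V) (x y : ℝ) :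
    HasDerivAt (fun s => V (x, s)) (fderiv ℝ V (x, y) (0, 1)) y :=
  (hV.differentiable_one (x, y)).hasFDerivAt.comp_hasDerivAt y
    ((hasDerivAt_const y x).prodMk (hasDerivAt_id y))

lemma continuous_intervalIntegral_slice {U : ℝ × ℝ → ℝ} (hU : Continuous U) (hw : Continuous w) :
    Continuous fun x => ∫ y in p..q, U (x, y) * w y :=
  intervalIntegral.continuous_parametric_intervalIntegral_of_continuous'
    (f := fun x y => U (x, y) * w y) (by fun_prop) p q

lemma hasDerivAt_intervalIntegral_slice (hV : ContDiff ℝ 1 V) (hw : Continuous w) (x : ℝ) :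
    HasDerivAt (fun x => ∫ y in p..q, V (x, y) * w y)
      (∫ y in p..q, fderiv ℝ V (x, y) (1, 0) * w y) x := by
  have hV_cont := hV.continuous
  have := continuous_fderiv_apply_of_contDiff hV (1, 0)
  exact hasDerivAt_intervalIntegral_of_continuous_deriv (Φ := fun x y => V (x, y) * w y)
    (Φ' := fun x y => fderiv ℝ V (x, y) (1, 0) * w y) (fun x => by fun_prop) (by fun_prop)
    (fun x y => (hasDerivAt_left_of_contDiff hV x y).mul_const _) x

lemma WeightedPoincare.slice_le {K : ℝ} (hP : WeightedPoincare w K p q) (hpq : p < q)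
    (hw : Continuous w) (hw_pos : ∀ y, 0 < w y) (hV : ContDiff ℝ 1 V) (x : ℝ) :
    K * ((∫ y in p..q, w y) * (∫ y in p..q, V (x, y) ^ 2 * w y) -
        (∫ y in p..q, V (x, y) * w y) ^ 2) + (∫ y in p..q, fderiv ℝ V (x, y) (1, 0) * w y) ^ 2 ≤
      (∫ y in p..q, w y) * ∫ y in p..q,
        (fderiv ℝ V (x, y) (1, 0) ^ 2 + fderiv ℝ V (x, y) (0, 1) ^ 2) * w y := by
  have := continuous_fderiv_apply_of_contDiff hV (1, 0)
  have := continuous_fderiv_apply_of_contDiff hV (0, 1)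
  have hmass : 0 < ∫ y in p..q, w y :=
    intervalIntegral.intervalIntegral_pos_of_pos (hw.intervalIntegrable _ _) hw_pos hpq
  have hvertical := hP.variance_le hw hmass (f := fun y => V (x, y)) (by fun_prop)
  have hhorizontal := sq_integral_mul_le (g := fun y => fderiv ℝ V (x, y) (1, 0)) (by fun_prop) hw
    (fun y => (hw_pos y).le) hpq.le
  simp only [(hasDerivAt_right_of_contDiff hV x _).deriv] at hvertical
  simp only [add_mul]
  rw [intervalIntegral.integral_add (Continuous.intervalIntegrable (by fun_prop) _ _)
    (Continuous.intervalIntegrable (by fun_prop) _ _)]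
  linarith

theorem WeightedPoincare.prod {w₁ w₂ : ℝ → ℝ} {K a b p q : ℝ} (hP₁ : WeightedPoincare w₁ K a b)
    (hP₂ : WeightedPoincare w₂ K p q) (hab : a ≤ b) (hpq : p < q) (hw₁ : Continuous w₁)
    (hw₁_nonneg : ∀ x, 0 ≤ w₁ x) (hw₂ : Continuous w₂) (hw₂_pos : ∀ y, 0 < w₂ y)
    (hV : ContDiff ℝ 1 V) (hmean : ∫ x in a..b, (∫ y in p..q, V (x, y) * w₂ y) * w₁ x = 0) :
    K * ∫ x in a..b, (∫ y in p..q, V (x, y) ^ 2 * w₂ y) * w₁ x ≤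
      ∫ x in a..b, (∫ y in p..q,
        (fderiv ℝ V (x, y) (1, 0) ^ 2 + fderiv ℝ V (x, y) (0, 1) ^ 2) * w₂ y) * w₁ x := by
  have hVx_cont := continuous_fderiv_apply_of_contDiff hV (1, 0)
  have hVy_cont := continuous_fderiv_apply_of_contDiff hV (0, 1)
  set Z := ∫ y in p..q, w₂ y
  have hZ : 0 < Z :=
    intervalIntegral.intervalIntegral_pos_of_pos (hw₂.intervalIntegrable _ _) hw₂_pos hpq
  set M : ℝ → ℝ := fun x => ∫ y in p..q, V (x, y) * w₂ y
  set M' : ℝ → ℝ := fun x => ∫ y in p..q, fderiv ℝ V (x, y) (1, 0) * w₂ y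
  set A : ℝ → ℝ := fun x => ∫ y in p..q, V (x, y) ^ 2 * w₂ y
  set D : ℝ → ℝ := fun x => ∫ y in p..q,
    (fderiv ℝ V (x, y) (1, 0) ^ 2 + fderiv ℝ V (x, y) (0, 1) ^ 2) * w₂ y
  have hA : Continuous A := continuous_intervalIntegral_slice (hV.continuous.pow 2) hw₂
  have hD : Continuous D :=
    continuous_intervalIntegral_slice ((hVx_cont.pow 2).add (hVy_cont.pow 2)) hw₂
  have hM' : Continuous M' := continuous_intervalIntegral_slice hVx_cont hw₂
  have hM_deriv : deriv M = M' :=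
    funext fun x => (hasDerivAt_intervalIntegral_slice hV hw₂ x).deriv
  have hM : ContDiff ℝ 1 M := contDiff_one_iff_deriv.2
    ⟨fun x => (hasDerivAt_intervalIntegral_slice hV hw₂ x).differentiableAt, hM_deriv ▸ hM'⟩
  have hM_cont := hM.continuous
  have hmarginal : K * ∫ x in a..b, M x ^ 2 * w₁ x ≤ ∫ x in a..b, M' x ^ 2 * w₁ x :=
    hM_deriv ▸ hP₁ M hM hmean
  have hslices : ∫ x in a..b, (K * Z * (A x * w₁ x) - K * (M x ^ 2 * w₁ x) + M' x ^ 2 * w₁ x) ≤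
      ∫ x in a..b, Z * (D x * w₁ x) := by
    refine intervalIntegral.integral_mono_on hab (Continuous.intervalIntegrable (by fun_prop) _ _)
      (Continuous.intervalIntegrable (by fun_prop) _ _) fun x _ => ?_
    have hslice := hP₂.slice_le hpq hw₂ hw₂_pos hV x
    linarith [mul_le_mul_of_nonneg_right hslice (hw₁_nonneg x)]
  rw [intervalIntegral.integral_add, intervalIntegral.integral_sub] at hslices
  · simp only [intervalIntegral.integral_const_mul] at hslices
    refine le_of_mul_le_mul_left ?_ hZ
    linarith
  all_goals exact Continuous.intervalIntegrable (by fun_prop) _ _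

end Tensorization

section Rectangle

local notation "ℝ²" => EuclideanSpace ℝ (Fin 2)

/-- The open rectangle `(a, b) × (p, q)` in the Euclidean plane. -/
def rectangle (a b p q : ℝ) : Set ℝ² :=
  {z | z 0 ∈ Ioo a b ∧ z 1 ∈ Ioo p q}

/-- The identification of `ℝ × ℝ` with the Euclidean plane. It is only a linear homeomorphism,
because `ℝ × ℝ` carries the supremum norm. -/
noncomputable def planeEquiv : (ℝ × ℝ) ≃L[ℝ] ℝ² :=
  ((EuclideanSpace.equiv (Fin 2) ℝ).trans (ContinuousLinearEquiv.finTwoArrow ℝ ℝ)).symm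

lemma planeEquiv_apply (z : ℝ × ℝ) : planeEquiv z = !₂[z.1, z.2] := rfl

lemma measurePreserving_planeEquiv : MeasurePreserving planeEquiv :=
  (PiLp.volume_preserving_toLp (Fin 2)).comp ((volume_preserving_finTwoArrow ℝ).symm _)

variable {a b p q : ℝ}

lemma preimage_planeEquiv_rectangle : planeEquiv ⁻¹' rectangle a b p q = Ioo a b ×ˢ Ioo p q := by
  ext z
  simp [rectangle, planeEquiv_apply]

lemma rectangle_eq_image : rectangle a b p q = planeEquiv '' (Ioo a b ×ˢ Ioo p q) := by
  rw [← preimage_planeEquiv_rectangle, planeEquiv.surjective.image_preimage]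

lemma isOpen_rectangle : IsOpen (rectangle a b p q) := by
  rw [rectangle_eq_image]
  exact planeEquiv.toHomeomorph.isOpenMap _ (isOpen_Ioo.prod isOpen_Ioo)

lemma isBounded_rectangle : Bornology.IsBounded (rectangle a b p q) := by
  rw [rectangle_eq_image]
  exact planeEquiv.lipschitz.isBounded_image
    ((Metric.isBounded_Ioo a b).prod (Metric.isBounded_Ioo p q))

lemma rectangle_nonempty (hab : a < b) (hpq : p < q) : (rectangle a b p q).Nonempty := by
  rw [rectangle_eq_image]
  exact ((nonempty_Ioo.2 hab).prod (nonempty_Ioo.2 hpq)).image _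

lemma setIntegral_rectangle {E : Type*} [NormedAddCommGroup E] [NormedSpace ℝ E]
    {f : ℝ² → E} (hf : Continuous f) (hab : a ≤ b) (hpq : p ≤ q) :
    ∫ z in rectangle a b p q, f z = ∫ x in a..b, ∫ y in p..q, f (planeEquiv (x, y)) := by
  rw [← measurePreserving_planeEquiv.setIntegral_preimage_emb
    planeEquiv.toHomeomorph.measurableEmbedding, preimage_planeEquiv_rectangle,
    Measure.volume_eq_prod, setIntegral_prod]
  · simp only [intervalIntegral.integral_of_le, hab, hpq, integral_Ioc_eq_integral_Ioo]
  · exact ((hf.comp planeEquiv.continuous).continuousOn.integrableOn_compact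
      (isCompact_Icc.prod isCompact_Icc)).mono_set
        (prod_mono Ioo_subset_Icc_self Ioo_subset_Icc_self)

lemma sum_sq_apply_orthonormalBasis {ι E : Type*} [Fintype ι] [NormedAddCommGroup E]
    [InnerProductSpace ℝ E] [CompleteSpace E] (e : OrthonormalBasis ι ℝ E) (L : E →L[ℝ] ℝ) :
    ∑ i, L (e i) ^ 2 = ‖L‖ ^ 2 := by
  obtain ⟨g, rfl⟩ := (InnerProductSpace.toDual ℝ E).surjective L
  simpa using e.sum_sq_norm_inner_left g

lemma sq_add_sq_fderiv_comp_planeEquiv {v : ℝ² → ℝ} (z : ℝ × ℝ) :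
    fderiv ℝ (v ∘ planeEquiv) z (1, 0) ^ 2 + fderiv ℝ (v ∘ planeEquiv) z (0, 1) ^ 2 =
      ‖fderiv ℝ v (planeEquiv z)‖ ^ 2 := by
  have hbasis : ∀ i, EuclideanSpace.basisFun (Fin 2) ℝ i = planeEquiv (![(1, 0), (0, 1)] i) := by
    intro i
    ext j
    fin_cases i <;> fin_cases j <;> simp [planeEquiv_apply]
  simp [← sum_sq_apply_orthonormalBasis (EuclideanSpace.basisFun (Fin 2) ℝ), hbasis,
    planeEquiv.comp_right_fderiv, Fin.sum_univ_two]

theorem WeightedPoincare.setIntegral_rectangle_le {w₁ w₂ : ℝ → ℝ} {K : ℝ}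
    (hP₁ : WeightedPoincare w₁ K a b) (hP₂ : WeightedPoincare w₂ K p q) (hab : a ≤ b) (hpq : p < q)
    (hw₁ : Continuous w₁) (hw₁_nonneg : ∀ x, 0 ≤ w₁ x)
    (hw₂ : Continuous w₂) (hw₂_pos : ∀ y, 0 < w₂ y)
    {v : ℝ² → ℝ} (hv : ContDiff ℝ 1 v)
    (hmean : ∫ z in rectangle a b p q, v z * (w₁ (z 0) * w₂ (z 1)) = 0) :
    K * ∫ z in rectangle a b p q, v z ^ 2 * (w₁ (z 0) * w₂ (z 1)) ≤
      ∫ z in rectangle a b p q, ‖fderiv ℝ v z‖ ^ 2 * (w₁ (z 0) * w₂ (z 1)) := by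
  have hiterated : ∀ f : ℝ² → ℝ, Continuous f →
      ∫ z in rectangle a b p q, f z * (w₁ (z 0) * w₂ (z 1)) =
        ∫ x in a..b, (∫ y in p..q, f (planeEquiv (x, y)) * w₂ y) * w₁ x := fun f hf => by
    rw [setIntegral_rectangle (by fun_prop) hab hpq.le]
    simp only [← intervalIntegral.integral_mul_const]
    congr! 4
    simp only [planeEquiv_apply, Matrix.cons_val_zero, Matrix.cons_val_one]
    ring
  have hv_cont := hv.continuous
  have hv'_cont := hv.continuous_fderiv one_ne_zero
  rw [hiterated v hv_cont] at hmean
  rw [hiterated (fun z => v z ^ 2) (by fun_prop),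
    hiterated (fun z => ‖fderiv ℝ v z‖ ^ 2) (by fun_prop)]
  have hprod := hP₁.prod (V := v ∘ planeEquiv) hP₂ hab hpq hw₁ hw₁_nonneg hw₂ hw₂_pos
    (hv.comp planeEquiv.contDiff) hmean
  simpa only [sq_add_sq_fderiv_comp_planeEquiv, Function.comp_apply] using hprod

end Rectangle

section WeightedMu1

variable {N : ℕ} {h : ℝ → ℝ} {Ω : Set (EuclideanSpace ℝ (Fin N))}

lemma integrableOn_of_isBounded {X E : Type*} [MetricSpace X] [ProperSpace X]
    [MeasurableSpace X] [OpensMeasurableSpace X] {μ : Measure X} [IsFiniteMeasureOnCompacts μ]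
    [NormedAddCommGroup E] {f : X → E} (hf : Continuous f) {s : Set X}
    (hs : Bornology.IsBounded s) : IntegrableOn f s μ :=
  (hf.continuousOn.integrableOn_compact hs.isCompact_closure).mono_set subset_closure

lemma setIntegral_pos_of_isOpen {X : Type*} [TopologicalSpace X] [MeasurableSpace X]
    [OpensMeasurableSpace X] {μ : Measure X} [μ.IsOpenPosMeasure] {f : X → ℝ} {s : Set X}
    (hs : IsOpen s) (hf : Continuous f) (hf_nonneg : ∀ x, 0 ≤ f x) (hint : IntegrableOn f s μ)
    {x₀ : X} (hx₀ : x₀ ∈ s) (hfx₀ : f x₀ ≠ 0) : 0 < ∫ x in s, f x ∂μ := by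
  rw [setIntegral_pos_iff_support_of_nonneg_ae (Eventually.of_forall hf_nonneg) hint]
  exact (hf.isOpen_support.inter hs).measure_pos μ ⟨x₀, hfx₀, hx₀⟩

lemma weightedMu1_le_rayleigh {v : EuclideanSpace ℝ (Fin N) → ℝ} (hv : ContDiff ℝ 1 v)
    (hpos : 0 < ∫ x in Ω, v x ^ 2 * Real.exp (h ‖x‖))
    (hmean : ∫ x in Ω, v x * Real.exp (h ‖x‖) = 0) :
    weightedMu1 N h Ω ≤ (∫ x in Ω, ‖fderiv ℝ v x‖ ^ 2 * Real.exp (h ‖x‖)) /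
      ∫ x in Ω, v x ^ 2 * Real.exp (h ‖x‖) := by
  refine csInf_le ⟨0, ?_⟩ ⟨v, hv, hpos, hmean, rfl⟩
  rintro μ ⟨u, -, hu, -, rfl⟩
  exact div_nonneg (integral_nonneg fun x => by positivity) hu.le

lemma exists_mem_coord_ne [NeZero N] (hΩ : IsOpen Ω) (hne : Ω.Nonempty) (m : ℝ) :
    ∃ x ∈ Ω, x 0 ≠ m := by
  by_contra! hconst
  have hproj : IsOpen ((EuclideanSpace.proj (𝕜 := ℝ) (0 : Fin N)) '' Ω) :=
    (EuclideanSpace.proj (𝕜 := ℝ) (0 : Fin N)).isOpenMap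
      (fun t => ⟨EuclideanSpace.single 0 t, by simp⟩) _ hΩ
  have hsingleton : (EuclideanSpace.proj (𝕜 := ℝ) (0 : Fin N)) '' Ω = {m} :=
    (hne.image _).subset_singleton_iff.1 (image_subset_iff.2 hconst)
  exact not_isOpen_singleton m (hsingleton ▸ hproj)

theorem le_weightedMu1 [NeZero N] {K : ℝ} (hh : Continuous h) (hΩ : IsOpen Ω)
    (hΩ_bdd : Bornology.IsBounded Ω) (hΩ_ne : Ω.Nonempty)
    (hK : ∀ v : EuclideanSpace ℝ (Fin N) → ℝ, ContDiff ℝ 1 v →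
      ∫ x in Ω, v x * Real.exp (h ‖x‖) = 0 → K * ∫ x in Ω, v x ^ 2 * Real.exp (h ‖x‖) ≤
        ∫ x in Ω, ‖fderiv ℝ v x‖ ^ 2 * Real.exp (h ‖x‖)) :
    K ≤ weightedMu1 N h Ω := by
  refine le_csInf ?_ ?_
  · have hint : ∀ f : EuclideanSpace ℝ (Fin N) → ℝ, Continuous f → IntegrableOn f Ω :=
      fun f hf => integrableOn_of_isBounded hf hΩ_bdd
    obtain ⟨x₁, hx₁⟩ := hΩ_ne
    have hmass : 0 < ∫ x in Ω, Real.exp (h ‖x‖) :=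
      setIntegral_pos_of_isOpen hΩ (by fun_prop) (fun x => (Real.exp_pos _).le)
        (hint _ (by fun_prop)) hx₁ (Real.exp_ne_zero _)
    set m := (∫ x in Ω, x 0 * Real.exp (h ‖x‖)) / ∫ x in Ω, Real.exp (h ‖x‖)
    obtain ⟨x₀, hx₀, hx₀m⟩ := exists_mem_coord_ne hΩ ⟨x₁, hx₁⟩ m
    refine ⟨_, fun x => x 0 - m, by fun_prop, ?_, ?_, rfl⟩
    · exact setIntegral_pos_of_isOpen hΩ (by fun_prop) (fun x => by positivity)
        (hint _ (by fun_prop)) hx₀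
        (mul_ne_zero (pow_ne_zero 2 (sub_ne_zero.2 hx₀m)) (Real.exp_ne_zero _))
    · simp only [sub_mul]
      rw [integral_sub (hint _ (by fun_prop)) (hint _ (by fun_prop)), integral_const_mul,
        div_mul_cancel₀ _ hmass.ne', sub_self]
  · rintro μ ⟨v, hv, hpos, hmean, rfl⟩
    exact (le_div_iff₀ hpos).2 (hK v hv hmean)

end WeightedMu1

section Ball

variable {ι : Type*} [Fintype ι]

lemma setIntegral_ball_comp_linearIsometryEquiv {E F : Type*} [NormedAddCommGroup E]
    [InnerProductSpace ℝ E] [FiniteDimensional ℝ E] [MeasurableSpace E] [BorelSpace E]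
    [NormedAddCommGroup F] [NormedSpace ℝ F] (S : E ≃ₗᵢ[ℝ] E) (f : E → F) (r : ℝ) :
    ∫ x in Metric.ball 0 r, f (S x) = ∫ x in Metric.ball 0 r, f x := by
  simpa [LinearIsometryEquiv.preimage_ball] using
    S.measurePreserving.setIntegral_preimage_emb S.toHomeomorph.measurableEmbedding f
      (Metric.ball 0 r)

lemma setIntegral_ball_coord_mul_radial (φ : ℝ → ℝ) (r : ℝ) (i : ι) :
    ∫ x in Metric.ball (0 : EuclideanSpace ℝ ι) r, x i * φ ‖x‖ = 0 := by
  have hodd := setIntegral_ball_comp_linearIsometryEquiv (LinearIsometryEquiv.neg ℝ)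
    (fun x : EuclideanSpace ℝ ι => x i * φ ‖x‖) r
  simp only [LinearIsometryEquiv.coe_neg, PiLp.neg_apply, norm_neg, neg_mul, integral_neg] at hodd
  linarith

lemma setIntegral_ball_coord_sq_mul_radial_eq (φ : ℝ → ℝ) (r : ℝ) (i j : ι) :
    ∫ x in Metric.ball (0 : EuclideanSpace ℝ ι) r, x i ^ 2 * φ ‖x‖ =
      ∫ x in Metric.ball (0 : EuclideanSpace ℝ ι) r, x j ^ 2 * φ ‖x‖ := by
  classical
  have hswap := setIntegral_ball_comp_linearIsometryEquiv
    (LinearIsometryEquiv.piLpCongrLeft 2 ℝ ℝ (Equiv.swap i j))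
    (fun x : EuclideanSpace ℝ ι => x j ^ 2 * φ ‖x‖) r
  simpa [LinearIsometryEquiv.piLpCongrLeft_apply, Equiv.piCongrLeft'] using hswap

lemma setIntegral_ball_norm_sq_mul_radial {φ : ℝ → ℝ} (hφ : Continuous φ) (r : ℝ) (i : ι) :
    ∫ x in Metric.ball (0 : EuclideanSpace ℝ ι) r, ‖x‖ ^ 2 * φ ‖x‖ =
      Fintype.card ι * ∫ x in Metric.ball (0 : EuclideanSpace ℝ ι) r, x i ^ 2 * φ ‖x‖ := by
  simp only [EuclideanSpace.real_norm_sq_eq, Finset.sum_mul]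
  rw [integral_finsetSum _ fun j _ => integrableOn_of_isBounded (by fun_prop) Metric.isBounded_ball]
  simp [setIntegral_ball_coord_sq_mul_radial_eq φ r _ i]

lemma norm_fderiv_coord_le (i : ι) (x : EuclideanSpace ℝ ι) :
    ‖fderiv ℝ (fun y : EuclideanSpace ℝ ι => y i) x‖ ≤ 1 := by
  have hproj : HasFDerivAt (fun y : EuclideanSpace ℝ ι => y i) (EuclideanSpace.proj (𝕜 := ℝ) i) x :=
    (EuclideanSpace.proj (𝕜 := ℝ) i).hasFDerivAt
  rw [hproj.fderiv]
  exact ContinuousLinearMap.opNorm_le_bound _ zero_le_one fun y => by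
    simpa using PiLp.norm_apply_le y i

theorem weightedMu1_ball_le {N : ℕ} [NeZero N] {h : ℝ → ℝ} (hh : Continuous h) {r : ℝ}
    (hr : 0 < r) :
    weightedMu1 N h (Metric.ball 0 r) ≤
      N * (∫ x in Metric.ball (0 : EuclideanSpace ℝ (Fin N)) r, Real.exp (h ‖x‖)) /
        ∫ x in Metric.ball (0 : EuclideanSpace ℝ (Fin N)) r, ‖x‖ ^ 2 * Real.exp (h ‖x‖) := by
  set B := Metric.ball (0 : EuclideanSpace ℝ (Fin N)) r
  have hint : ∀ f : EuclideanSpace ℝ (Fin N) → ℝ, Continuous f → IntegrableOn f B :=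
    fun f hf => integrableOn_of_isBounded hf Metric.isBounded_ball
  obtain ⟨x₀, hx₀, hx₀_ne⟩ : ∃ x ∈ B, x 0 ≠ 0 :=
    exists_mem_coord_ne Metric.isOpen_ball (Metric.nonempty_ball.2 hr) 0
  have hpos : 0 < ∫ x in B, x 0 ^ 2 * Real.exp (h ‖x‖) :=
    setIntegral_pos_of_isOpen Metric.isOpen_ball (by fun_prop) (fun x => by positivity)
      (hint _ (by fun_prop)) hx₀ (mul_ne_zero (pow_ne_zero 2 hx₀_ne) (Real.exp_ne_zero _))
  have henergy : ∫ x in B, ‖fderiv ℝ (fun x : EuclideanSpace ℝ (Fin N) => x 0) x‖ ^ 2 *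
      Real.exp (h ‖x‖) ≤ ∫ x in B, Real.exp (h ‖x‖) := by
    have hcoord : ContDiff ℝ 1 fun x : EuclideanSpace ℝ (Fin N) => x 0 := by fun_prop
    have := hcoord.continuous_fderiv one_ne_zero
    refine setIntegral_mono (hint _ (by fun_prop)) (hint _ (by fun_prop)) fun x => ?_
    exact mul_le_of_le_one_left (Real.exp_pos _).le
      (pow_le_one₀ (norm_nonneg _) (norm_fderiv_coord_le 0 x))
  refine (weightedMu1_le_rayleigh (by fun_prop) hpos
    (setIntegral_ball_coord_mul_radial (fun t => Real.exp (h t)) r 0)).trans ?_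
  rw [setIntegral_ball_norm_sq_mul_radial (φ := fun t => Real.exp (h t)) (by fun_prop) r 0,
    Fintype.card_fin, mul_div_mul_left _ _ (NeZero.ne (N : ℝ))]
  gcongr

lemma setIntegral_ball_fun_norm {E F : Type*} [NormedAddCommGroup E] [NormedSpace ℝ E]
    [Nontrivial E] [FiniteDimensional ℝ E] [MeasurableSpace E] [BorelSpace E]
    [NormedAddCommGroup F] [NormedSpace ℝ F] (μ : Measure E) [μ.IsAddHaarMeasure] (φ : ℝ → F)
    {r : ℝ} (hr : 0 ≤ r) :
    ∫ x in Metric.ball (0 : E) r, φ ‖x‖ ∂μ = Module.finrank ℝ E • μ.real (Metric.ball 0 1) •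
      ∫ t in 0..r, t ^ (Module.finrank ℝ E - 1) • φ t := by
  have hball : ∀ x : E, (Iio r).indicator φ ‖x‖ =
      (Metric.ball (0 : E) r).indicator (fun x => φ ‖x‖) x := fun x => by simp [indicator]
  have hradius : ∀ t, t ^ (Module.finrank ℝ E - 1) • (Iio r).indicator φ t =
      (Iio r).indicator (fun t => t ^ (Module.finrank ℝ E - 1) • φ t) t := fun t => by
    simp [indicator]
  have hpolar := integral_fun_norm_addHaar μ ((Iio r).indicator φ)
  simp only [hball, hradius] at hpolar
  rwa [integral_indicator Metric.isOpen_ball.measurableSet, setIntegral_indicator measurableSet_Iio,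
    Ioi_inter_Iio, ← integral_Ioc_eq_integral_Ioo, ← intervalIntegral.integral_of_le hr] at hpolar

end Ball

section AntiGaussianDisk

lemma setIntegral_disk_fun_norm {Φ φ : ℝ → ℝ} (hφ : Continuous φ)
    (hΦ : ∀ t, HasDerivAt Φ (t * φ t) t) {r : ℝ} (hr : 0 ≤ r) :
    ∫ x in Metric.ball (0 : EuclideanSpace ℝ (Fin 2)) r, φ ‖x‖ = 2 * Real.pi * (Φ r - Φ 0) := by
  rw [setIntegral_ball_fun_norm _ _ hr, ← intervalIntegral.integral_eq_sub_of_hasDerivAt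
    (fun t _ => hΦ t) (Continuous.intervalIntegrable (by fun_prop) _ _)]
  simp [Measure.real, EuclideanSpace.volume_ball_fin_two, mul_assoc, Real.pi_nonneg]

lemma hasDerivAt_exp_sq (t : ℝ) :
    HasDerivAt (fun t : ℝ => Real.exp (t ^ 2)) (2 * t * Real.exp (t ^ 2)) t := by
  simpa [mul_comm] using (hasDerivAt_pow 2 t).exp

lemma setIntegral_disk_exp_sq {r : ℝ} (hr : 0 ≤ r) :
    ∫ x in Metric.ball (0 : EuclideanSpace ℝ (Fin 2)) r, Real.exp (‖x‖ ^ 2) =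
      Real.pi * (Real.exp (r ^ 2) - 1) := by
  rw [setIntegral_disk_fun_norm (Φ := fun t => Real.exp (t ^ 2) / 2)
    (φ := fun t => Real.exp (t ^ 2)) (by fun_prop) (fun t => ?_) hr]
  · simp only [zero_pow two_ne_zero, Real.exp_zero]
    ring
  · exact ((hasDerivAt_exp_sq t).div_const 2).congr_deriv (by ring)

lemma setIntegral_disk_sq_mul_exp_sq {r : ℝ} (hr : 0 ≤ r) :
    ∫ x in Metric.ball (0 : EuclideanSpace ℝ (Fin 2)) r, ‖x‖ ^ 2 * Real.exp (‖x‖ ^ 2) =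
      Real.pi * ((r ^ 2 - 1) * Real.exp (r ^ 2) + 1) := by
  rw [setIntegral_disk_fun_norm (Φ := fun t => (t ^ 2 - 1) * Real.exp (t ^ 2) / 2)
    (φ := fun t => t ^ 2 * Real.exp (t ^ 2)) (by fun_prop) (fun t => ?_) hr]
  · simp only [zero_pow two_ne_zero, Real.exp_zero]
    ring
  · refine ((((hasDerivAt_pow 2 t).sub_const 1).mul (hasDerivAt_exp_sq t)).div_const 2).congr_deriv
      ?_
    simp only [Nat.cast_ofNat, Nat.add_one_sub_one, pow_one]
    ring

theorem weightedMu1_disk_sq_le {r : ℝ} (hr : 0 < r) :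
    weightedMu1 2 (fun t => t ^ 2) (Metric.ball 0 r) ≤ 2 + 4 / (Real.exp (r ^ 2) - 1) := by
  have hexcess : 0 < Real.exp (r ^ 2) - 1 := sub_pos.2 (Real.one_lt_exp_iff.2 (by positivity))
  have hlog : 2 * (Real.exp (r ^ 2) - 1) ≤ r ^ 2 * (Real.exp (r ^ 2) + 1) := by
    have hle := Real.le_log_one_add_of_nonneg hexcess.le
    rwa [add_sub_cancel, Real.log_exp, div_le_iff₀ (by positivity), sub_add,
      show (1 : ℝ) - 2 = -1 by norm_num, sub_neg_eq_add] at hle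
  refine (weightedMu1_ball_le (by fun_prop) hr).trans ?_
  rw [setIntegral_disk_exp_sq hr.le, setIntegral_disk_sq_mul_exp_sq hr.le, mul_left_comm,
    mul_div_mul_left _ _ Real.pi_ne_zero]
  set E := Real.exp (r ^ 2)
  have hmoment : (E - 1) ^ 2 / (E + 1) ≤ (r ^ 2 - 1) * E + 1 := by
    rw [div_le_iff₀ (by linarith)]
    linarith [mul_le_mul_of_nonneg_right hlog (by linarith : 0 ≤ E)]
  calc (2 : ℕ) * (E - 1) / ((r ^ 2 - 1) * E + 1)
      ≤ (2 : ℕ) * (E - 1) / ((E - 1) ^ 2 / (E + 1)) := by gcongr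
    _ = 2 + 4 / (E - 1) := by
      push_cast
      field_simp
      ring

end AntiGaussianDisk

section Counterexample

/-- The sextic `He₆(√2 t)` of the counterexample, where `He₆` is the probabilists' Hermite
polynomial. -/
def hermiteSextic (t : ℝ) : ℝ :=
  8 * t ^ 6 - 60 * t ^ 4 + 90 * t ^ 2 - 15

lemma hermiteSextic_abs (t : ℝ) : hermiteSextic |t| = hermiteSextic t := by
  rcases abs_choice t with h | h <;> rw [h]
  simp only [hermiteSextic]
  ring

lemma strictMonoOn_hermiteSextic : StrictMonoOn hermiteSextic (Icc 0 0.44) := by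
  intro s ⟨hs, _⟩ t ⟨_, ht⟩ hst
  have hsq : s ^ 2 < t ^ 2 := by gcongr
  have ht_sq : t ^ 2 ≤ 0.44 ^ 2 := by gcongr
  have hslope : 0 < 8 * (t ^ 4 + t ^ 2 * s ^ 2 + s ^ 4) - 60 * (t ^ 2 + s ^ 2) + 90 := by
    have hquartic : 0 ≤ t ^ 4 + t ^ 2 * s ^ 2 + s ^ 4 := by positivity
    linarith
  refine sub_pos.1 ((mul_pos (sub_pos.2 hsq) hslope).trans_eq ?_)
  simp only [hermiteSextic]
  ring

lemma hermiteSextic_pos {t : ℝ} (ht : 0.44 ≤ t) (ht' : t ≤ 1.3) : 0 < hermiteSextic t := by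
  have hlower : 0.44 ^ 2 ≤ t ^ 2 := by gcongr
  have hupper : t ^ 2 ≤ 1.3 ^ 2 := by gcongr
  have hcubic : hermiteSextic t = 8 * (t ^ 2) ^ 3 - 60 * (t ^ 2) ^ 2 + 90 * t ^ 2 - 15 := by
    simp only [hermiteSextic]
    ring
  -- As a cubic in `t ^ 2`, the sextic lies above its chord, which is positive at both ends.
  have hbetween : 0 ≤ (t ^ 2 - 0.44 ^ 2) * (1.3 ^ 2 - t ^ 2) :=
    mul_nonneg (sub_nonneg.2 hlower) (sub_nonneg.2 hupper)
  have hchord : 0 ≤ (t ^ 2 - 0.44 ^ 2) * (1.3 ^ 2 - t ^ 2) * (5 - t ^ 2) :=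
    mul_nonneg hbetween (by linarith)
  rw [hcubic]
  linarith

lemma first_zero_mem_Ioo {c : ℝ} (hc : 0 < c) (hcz : hermiteSextic c = 0)
    (hcfirst : ∀ t : ℝ, 0 < t → hermiteSextic t = 0 → c ≤ t) : c ∈ Ioo 0.43 0.44 := by
  have hc_lt : c < 0.44 := by
    have hcont : Continuous hermiteSextic := by unfold hermiteSextic; fun_prop
    obtain ⟨t, ht, ht0⟩ := intermediate_value_Ioo (by norm_num : (0.43 : ℝ) ≤ 0.44)
      hcont.continuousOn (show (0 : ℝ) ∈ _ by constructor <;> norm_num [hermiteSextic])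
    exact (hcfirst t (by linarith [ht.1]) ht0).trans_lt ht.2
  refine ⟨?_, hc_lt⟩
  refine (strictMonoOn_hermiteSextic.lt_iff_lt (by norm_num) ⟨hc.le, hc_lt.le⟩).1 ?_
  rw [hcz]
  norm_num [hermiteSextic]

lemma lt_second_zero {c d : ℝ} (hc : c ∈ Ioo 0 0.44) (hcz : hermiteSextic c = 0) (hcd : c < d)
    (hdz : hermiteSextic d = 0) : 1.3 < d := by
  by_contra! hd
  rcases le_total d 0.44 with hd' | hd'
  · exact hcd.ne (strictMonoOn_hermiteSextic.injOn ⟨hc.1.le, hc.2.le⟩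
      ⟨(hc.1.trans hcd).le, hd'⟩ (hcz.trans hdz.symm))
  · exact (hermiteSextic_pos hd' hd).ne' hdz

lemma hermiteSextic_ne_zero_of_abs_lt {c : ℝ}
    (hcfirst : ∀ t : ℝ, 0 < t → hermiteSextic t = 0 → c ≤ t) {x : ℝ} (hx : |x| < c) :
    hermiteSextic x ≠ 0 := by
  rcases eq_or_ne x 0 with rfl | hx0
  · norm_num [hermiteSextic]
  · rw [← hermiteSextic_abs]
    exact fun h0 => hx.not_ge (hcfirst _ (abs_pos.2 hx0) h0)

open Polynomial in
lemma aeval_sqrt_two_mul_hermite_six (t : ℝ) :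
    aeval (√2 * t) (hermite 6) = hermiteSextic t := by
  have hsix : hermite 6 = X ^ 6 - 15 * X ^ 4 + 45 * X ^ 2 - 15 := by
    simp only [hermite_add_two, hermite_one, hermite_zero]
    norm_num
    ring
  have hsq : √2 ^ 2 = (2 : ℝ) := Real.sq_sqrt zero_le_two
  have hfour : √2 ^ 4 = (4 : ℝ) := by rw [pow_mul √2 2 2, hsq]; norm_num
  have hpow_six : √2 ^ 6 = (8 : ℝ) := by rw [pow_mul √2 2 3, hsq]; norm_num
  simp only [hsix, map_sub, map_add, map_mul, map_pow, aeval_X, map_ofNat, mul_pow, hsq, hfour,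
    hpow_six, hermiteSextic]
  ring

lemma weightedPoincare_of_hermiteSextic_zeros {a b : ℝ} (hab : a < b)
    (ha : hermiteSextic a = 0) (hb : hermiteSextic b = 0)
    (hne : ∀ x ∈ Ioo a b, hermiteSextic x ≠ 0) :
    WeightedPoincare (fun x => Real.exp (x ^ 2)) 12 a b := by
  simp only [← aeval_sqrt_two_mul_hermite_six] at ha hb hne
  convert weightedPoincare_exp_sq_of_hermite_zeros hab ha hb hne
  norm_num

variable {a b p q : ℝ}

theorem le_weightedMu1_rectangle_sq {K : ℝ} (hab : a < b) (hpq : p < q)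
    (hP₁ : WeightedPoincare (fun x => Real.exp (x ^ 2)) K a b)
    (hP₂ : WeightedPoincare (fun y => Real.exp (y ^ 2)) K p q) :
    K ≤ weightedMu1 2 (fun t => t ^ 2) (rectangle a b p q) := by
  refine le_weightedMu1 (by fun_prop) isOpen_rectangle isBounded_rectangle
    (rectangle_nonempty hab hpq) ?_
  intro v hv hmean
  simp only [EuclideanSpace.real_norm_sq_eq, Fin.sum_univ_two, Real.exp_add] at hmean ⊢
  exact hP₁.setIntegral_rectangle_le hP₂ hab.le hpq (by fun_prop)
    (fun _ => (Real.exp_pos _).le) (by fun_prop) (fun y => Real.exp_pos _) hv hmean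

lemma le_setIntegral_rectangle_exp_sq (hab : a ≤ b) (hpq : p ≤ q) :
    (q - p) * (b - a + (b ^ 3 - a ^ 3) / 3) ≤
      ∫ z in rectangle a b p q, Real.exp (‖z‖ ^ 2) := by
  calc (q - p) * (b - a + (b ^ 3 - a ^ 3) / 3)
      = ∫ z in rectangle a b p q, (1 + z 0 ^ 2) := by
        rw [setIntegral_rectangle (by fun_prop) hab hpq]
        simp only [planeEquiv_apply, Matrix.cons_val_zero, intervalIntegrable_const,
          intervalIntegral.integral_add, intervalIntegral.integral_const, smul_eq_mul, mul_one,
          intervalIntegral.intervalIntegrable_pow, IntervalIntegrable.const_mul,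
          intervalIntegral.integral_sub, intervalIntegral.integral_const_mul, integral_pow,
          Nat.reduceAdd, Nat.cast_ofNat]
        ring
    _ ≤ ∫ z in rectangle a b p q, Real.exp (‖z‖ ^ 2) := by
        refine setIntegral_mono (integrableOn_of_isBounded (by fun_prop) isBounded_rectangle)
          (integrableOn_of_isBounded (by fun_prop) isBounded_rectangle) fun z => ?_
        rw [EuclideanSpace.real_norm_sq_eq, Fin.sum_univ_two]
        linarith [Real.add_one_le_exp (z 0 ^ 2 + z 1 ^ 2), sq_nonneg (z 1)]

lemma two_pi_div_five_lt_setIntegral_rectangle {c d : ℝ} (hc : c ∈ Ioo 0.43 0.44)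
    (hd : 1.3 < d) :
    2 * Real.pi / 5 < ∫ z in rectangle c d (-c) c, Real.exp (‖z‖ ^ 2) := by
  obtain ⟨hc_lower, hc_upper⟩ := hc
  have hc_cube : c ^ 3 ≤ 0.44 ^ 3 := by gcongr
  have hd_cube : 1.3 ^ 3 ≤ d ^ 3 := by gcongr
  calc 2 * Real.pi / 5 < 2 * 0.43 * 1.5 := by linarith [Real.pi_lt_d2]
    _ ≤ (c - -c) * (d - c + (d ^ 3 - c ^ 3) / 3) := by gcongr <;> linarith
    _ ≤ _ := le_setIntegral_rectangle_exp_sq (by linarith) (by linarith)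

end Counterexample

/-- The counterexample in ℝ² with anti-Gaussian weight `e^{x²+y²}`: with `c` and `d`
the first and second positive zeros of `8t⁶ - 60t⁴ + 90t² - 15`,
`T = (c,d) × (-c,c)`, and `r_T > 0` the radius with `π(e^{r_T²} - 1) = γ₂(T)`,
one has `μ₁(B_{r_T}; γ₂) < μ₁(T; γ₂)`: without symmetry about the origin, the
centered ball does not in general maximize the first nontrivial weighted Neumann
eigenvalue among domains of prescribed `γ₂`-measure. -/
theorem stmt_5 (c d : ℝ) (hc : 0 < c)
    (hcz : 8 * c ^ 6 - 60 * c ^ 4 + 90 * c ^ 2 - 15 = 0)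
    (hcfirst : ∀ t : ℝ, 0 < t → 8 * t ^ 6 - 60 * t ^ 4 + 90 * t ^ 2 - 15 = 0 → c ≤ t)
    (hcd : c < d)
    (hdz : 8 * d ^ 6 - 60 * d ^ 4 + 90 * d ^ 2 - 15 = 0)
    (hdsecond : ∀ t : ℝ, c < t → 8 * t ^ 6 - 60 * t ^ 4 + 90 * t ^ 2 - 15 = 0 → d ≤ t)
    (T : Set (EuclideanSpace ℝ (Fin 2)))
    (hT : T = {p : EuclideanSpace ℝ (Fin 2) | p 0 ∈ Set.Ioo c d ∧ p 1 ∈ Set.Ioo (-c) c})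
    (rT : ℝ) (hrT : 0 < rT)
    (hrTmeas : Real.pi * (Real.exp (rT ^ 2) - 1) = ∫ x in T, Real.exp (‖x‖ ^ 2)) :
    weightedMu1 2 (fun r => r ^ 2) (Metric.ball (0 : EuclideanSpace ℝ (Fin 2)) rT) <
      weightedMu1 2 (fun r => r ^ 2) T := by
  change T = rectangle c d (-c) c at hT
  subst hT
  have hc_mem : c ∈ Ioo 0.43 0.44 := first_zero_mem_Ioo hc hcz hcfirst
  have hd_lower : 1.3 < d := lt_second_zero ⟨hc, hc_mem.2⟩ hcz hcd hdz
  have hhorizontal : WeightedPoincare (fun x => Real.exp (x ^ 2)) 12 c d :=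
    weightedPoincare_of_hermiteSextic_zeros hcd hcz hdz
      fun x hx hx0 => hx.2.not_ge (hdsecond x hx.1 hx0)
  have hvertical : WeightedPoincare (fun y => Real.exp (y ^ 2)) 12 (-c) c :=
    weightedPoincare_of_hermiteSextic_zeros (neg_lt_self hc)
      (by rwa [← hermiteSextic_abs, abs_neg, hermiteSextic_abs]) hcz
      fun y hy => hermiteSextic_ne_zero_of_abs_lt hcfirst (abs_lt.2 hy)
  have hexcess : 2 / 5 < Real.exp (rT ^ 2) - 1 := by
    have hmeasure := two_pi_div_five_lt_setIntegral_rectangle hc_mem hd_lower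
    rw [← hrTmeas] at hmeasure
    refine lt_of_mul_lt_mul_left ?_ Real.pi_pos.le
    linarith
  calc weightedMu1 2 (fun r => r ^ 2) (Metric.ball 0 rT)
      ≤ 2 + 4 / (Real.exp (rT ^ 2) - 1) := weightedMu1_disk_sq_le hrT
    _ < 2 + 4 / (2 / 5) := by gcongr
    _ = 12 := by norm_num
    _ ≤ weightedMu1 2 (fun r => r ^ 2) (rectangle c d (-c) c) :=
      le_weightedMu1_rectangle_sq hcd (neg_lt_self hc) hhorizontal hvertical
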